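/- Recursive formula for the wavelet coefficients of Dirac functions: for each B ⊆ [n] with |B| ≥ 2 and each π' ∈ Γ(B), let (X^{B,π'}_{B'})_{B'∈P̄(B)} with X^{B,π'}_{B'} ∈ H_{B'} be the unique family such that δ_{π'} = Σ_{B'∈P̄(B)} φ_B X^{B,π'}_{B'} (such a family exists and is unique), and set α_B(π, π') := X^{B,π'}_B(π) for π ∈ Γ(B). Then for all π, π' ∈ Γ(B) with |B| = m and π = π₁…π_m: α_B(π, π') = 1{π = π'} − 1/m! − Σ_{1≤i<j≤m, j−i<m−1} (1/(m−j+i)!)·α_{C(i,j)}(π_i…π_j, π'|_{C(i,j)}), where C(i,j) := {π_i,…,π_j} is the content of the contiguous subword π_i…π_j of π. -/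

import Mathlib

open Finset
open scoped List

abbrev Word (n : ℕ) := List (Fin n)

/-- `Γ(A)`: duplicate-free words whose set of letters is exactly `A`. -/
noncomputable def rankings (n : ℕ) (A : Finset (Fin n)) : Finset (Word n) :=
  A.toList.permutations.toFinset

/-- All duplicate-free words on `[n]`. -/
noncomputable def allWords (n : ℕ) : Finset (Word n) :=
  Finset.univ.biUnion fun A : Finset (Fin n) => rankings n A

def IsRanking {n : ℕ} (A : Finset (Fin n)) (w : Word n) : Prop :=
  w.Nodup ∧ w.toFinset = A

instance {n : ℕ} (A : Finset (Fin n)) (w : Word n) : Decidable (IsRanking A w) :=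
  inferInstanceAs (Decidable (w.Nodup ∧ w.toFinset = A))

/-- Membership in `L(Γ(A))`: functions supported on `Γ(A)`. -/
def MemL {n : ℕ} (A : Finset (Fin n)) (F : Word n → ℝ) : Prop :=
  ∀ w, F w ≠ 0 → IsRanking A w

/-- Marginal operator `M_B` (with the convention `M_∅ F = (Σ F)·δ_0̄`). -/
noncomputable def marg {n : ℕ} (B : Finset (Fin n)) (F : Word n → ℝ) : Word n → ℝ :=
  fun π => if IsRanking B π then ∑ σ ∈ allWords n, (if π <+ σ then F σ else 0) else 0

/-- Membership in the localization space `H_B` (for `B = ∅` this is `L(Γ(∅)) = ℝ·δ_0̄`). -/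
def MemH {n : ℕ} (B : Finset (Fin n)) (F : Word n → ℝ) : Prop :=
  MemL B F ∧
    (∀ B' : Finset (Fin n), B' ⊂ B → 2 ≤ B'.card → marg B' F = 0) ∧
    (2 ≤ B.card → ∑ π ∈ rankings n B, F π = 0)

/-- `P̄(A) = {B ⊆ A : |B| ≥ 2} ∪ {∅}`. -/
def Pbar {n : ℕ} (A : Finset (Fin n)) : Finset (Finset (Fin n)) :=
  A.powerset.filter fun B => 2 ≤ B.card ∨ B = ∅

/-- Synthesis operator `φ_A`. -/
noncomputable def synth {n : ℕ} (A : Finset (Fin n)) (F : Word n → ℝ) : Word n → ℝ :=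
  fun σ =>
    if IsRanking A σ then
      F [] / (Nat.factorial A.card : ℝ) +
        ∑ π ∈ allWords n,
          (if π ≠ [] ∧ π <:+: σ then F π / (Nat.factorial (A.card - π.length + 1) : ℝ) else 0)
    else 0

/-- Dirac function `δ_π`. -/
noncomputable def dirac {n : ℕ} (π : Word n) : Word n → ℝ :=
  fun w => if w = π then 1 else 0

/-- `σ|_C`: the induced word of `σ` on `C`. -/
def restrictWord {n : ℕ} (σ : Word n) (C : Finset (Fin n)) : Word n :=
  σ.filter fun a => decide (a ∈ C)

/-!
Synthesis commutes with marginalisation: `M_C (φ_B F) = φ_C (M_{A ∩ C} F)` for `F ∈ L(Γ(A))` and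
`A, C ⊆ B`. It is enough to remove one letter `b` from `B` and to take `F = δ_p`, where the
identity amounts to counting the positions at which `b` can be inserted into a ranking `τ` of
`B \ {b}` so that `p` is a contiguous subword of the result.

Since proper marginals vanish on `H_A`, applying `M_C` to a decomposition of `F` over `B` keeps
exactly the components indexed by subsets of `C` and yields a decomposition of `M_C F`. By
induction on `C` this gives uniqueness, and it identifies the component of `δ_{π'}` at `C` with the
top component of `M_C δ_{π'} = δ_{π'|_C}`. The recursion is then the decomposition of `δ_{π'}`
evaluated at `π`: only the components at contents of contiguous subwords of `π` contribute, the
full word giving `α_B(π, π')` and the empty word `1 / m!`.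
-/

section ContiguousSubwords

variable {α : Type*}

theorem insertIdx_eq_take_append_cons_drop {k : ℕ} {l : List α} (hk : k ≤ l.length) (b : α) :
    l.insertIdx k b = l.take k ++ b :: l.drop k := by
  induction k generalizing l with
  | zero => simp
  | succ k ih =>
    cases l with
    | nil => simp at hk
    | cons a l => simp [ih (Nat.le_of_succ_le_succ hk)]

theorem append_append_inj_of_nodup {p s t s' t' : List α} (hp : p ≠ [])
    (hnodup : (s ++ p ++ t).Nodup) (h : s ++ p ++ t = s' ++ p ++ t') : s = s' ∧ t = t' := by
  obtain ⟨c, p, rfl⟩ := List.exists_cons_of_ne_nil hp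
  simp only [List.append_assoc, List.cons_append] at h hnodup
  have hc : c ∉ s' ++ (p ++ t') := (List.nodup_cons.1 (List.nodup_middle.1 (h ▸ hnodup))).1
  simp only [List.mem_append, not_or] at hc
  obtain ⟨hs, -, ht⟩ :=
    (List.append_cons_inj_of_notMem (by grind) (by grind)).1 h
  exact ⟨hs, List.append_cancel_left ht⟩

theorem infix_append_cons_iff_of_notMem {b : α} {p x y : List α} (hb : b ∉ p) :
    p <:+: x ++ b :: y ↔ p <:+: x ∨ p <:+: y := by
  constructor
  · intro h
    rcases List.infix_append_iff.1 h with hx | hy | ⟨p₁, p₂, rfl, hx, hy⟩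
    · exact .inl hx
    · rcases List.infix_cons_iff.1 hy with hpre | hy
      · rcases List.prefix_cons_iff.1 hpre with rfl | ⟨q, rfl, -⟩
        · exact .inl List.nil_infix
        · simp at hb
      · exact .inr hy
    · rcases List.prefix_cons_iff.1 hy with rfl | ⟨q, rfl, -⟩
      · exact .inl (by simpa using hx.isInfix)
      · simp at hb
  · rintro (h | h)
    · exact List.infix_append_of_infix_left h
    · exact List.infix_append_of_infix_right (List.infix_cons h)

theorem append_cons_infix_append_cons_iff {b : α} {u v x y : List α} (hx : b ∉ x) (hy : b ∉ y) :
    u ++ b :: v <:+: x ++ b :: y ↔ u <:+ x ∧ v <+: y := by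
  refine ⟨fun ⟨s, t, h⟩ => ?_, fun ⟨⟨s, hs⟩, ⟨t, ht⟩⟩ => ⟨s, t, by simp [← hs, ← ht]⟩⟩
  replace h : x ++ b :: y = (s ++ u) ++ b :: (v ++ t) := by simp [← h]
  obtain ⟨rfl, -, rfl⟩ := (List.append_cons_inj_of_notMem hx hy).1 h
  exact ⟨List.suffix_append _ _, List.prefix_append _ _⟩

theorem infix_take_iff_of_nodup {s p t : List α} {k : ℕ} (hp : p ≠ [])
    (hnodup : (s ++ p ++ t).Nodup) :
    p <:+: (s ++ p ++ t).take k ↔ s.length + p.length ≤ k := by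
  constructor
  · rintro ⟨s', t', h⟩
    obtain ⟨rfl, -⟩ := append_append_inj_of_nodup (t' := t' ++ (s ++ p ++ t).drop k) hp hnodup
      (by rw [← List.append_assoc, h, List.take_append_drop])
    have := congrArg List.length h
    simp only [List.length_append, List.length_take] at this
    omega
  · intro hk
    rw [List.take_append, List.take_of_length_le (by simpa using hk)]
    exact List.infix_append _ _ _

theorem infix_drop_iff_of_nodup {s p t : List α} {k : ℕ} (hp : p ≠ [])
    (hnodup : (s ++ p ++ t).Nodup) :
    p <:+: (s ++ p ++ t).drop k ↔ k ≤ s.length := by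
  constructor
  · rintro ⟨s', t', h⟩
    obtain ⟨hs, -⟩ := append_append_inj_of_nodup (s' := (s ++ p ++ t).take k ++ s') hp hnodup
      (by rw [List.append_assoc (_ ++ s'), List.append_assoc _ s', ← List.append_assoc s', h,
        List.take_append_drop])
    have := congrArg List.length hs
    have := congrArg List.length h
    simp only [List.length_append, List.length_take, List.length_drop] at *
    have := List.length_pos_iff.2 hp
    omega
  · intro hk
    rw [List.append_assoc, List.drop_append_of_le_length hk, ← List.append_assoc]
    exact List.infix_append _ _ _

variable [DecidableEq α]

-- Inserting `b` breaks the contiguous subword `p` exactly at the `|p| - 1` positions inside it.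
theorem card_infix_insertIdx_of_notMem {b : α} {p l : List α} (hl : l.Nodup) (hb : b ∉ p)
    (hp : p <:+: l) :
    #{k ∈ range (l.length + 1) | p <:+: l.insertIdx k b} = l.length - (p.length - 1) + 1 := by
  obtain ⟨s, t, rfl⟩ := hp
  have hfilter : {k ∈ range ((s ++ p ++ t).length + 1) | p <:+: (s ++ p ++ t).insertIdx k b} =
      range ((s ++ p ++ t).length + 1) \ Ioo s.length (s.length + p.length) := by
    ext k
    simp only [mem_filter, mem_sdiff, and_congr_right_iff, mem_range, Nat.lt_succ_iff]
    intro hk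
    rw [insertIdx_eq_take_append_cons_drop hk, infix_append_cons_iff_of_notMem hb]
    rcases eq_or_ne p [] with rfl | hne
    · simp
    · rw [infix_take_iff_of_nodup hne hl, infix_drop_iff_of_nodup hne hl, mem_Ioo]
      omega
  rw [hfilter, card_sdiff_of_subset, card_range, Nat.card_Ioo]
  · simp only [List.length_append]
    omega
  · intro k hk
    simp only [mem_Ioo, mem_range, List.length_append] at hk ⊢
    omega

theorem card_infix_insertIdx_of_mem {b : α} {u v l : List α} (hl : l.Nodup) (hb : b ∉ l)
    (hne : u ++ v ≠ []) (huv : u ++ v <:+: l) :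
    #{k ∈ range (l.length + 1) | u ++ b :: v <:+: l.insertIdx k b} = 1 := by
  obtain ⟨s, t, rfl⟩ := huv
  refine card_eq_one.2 ⟨s.length + u.length, ?_⟩
  ext k
  simp only [mem_filter, mem_range, mem_singleton, Nat.lt_succ_iff]
  constructor
  · rintro ⟨hk, h⟩
    rw [insertIdx_eq_take_append_cons_drop hk, append_cons_infix_append_cons_iff
      (fun h => hb (List.mem_of_mem_take h)) (fun h => hb (List.mem_of_mem_drop h))] at h
    obtain ⟨⟨s', hs⟩, ⟨t', ht⟩⟩ := h
    have hsplit : s ++ (u ++ v) ++ t = s' ++ (u ++ v) ++ t' := by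
      rw [← List.take_append_drop k (s ++ (u ++ v) ++ t), ← hs, ← ht]
      simp only [List.append_assoc]
    obtain ⟨rfl, -⟩ := append_append_inj_of_nodup hne hl hsplit
    rw [← List.length_append, hs, List.length_take_of_le hk]
  · rintro rfl
    have hk : s.length + u.length ≤ (s ++ (u ++ v) ++ t).length := by
      simp only [List.length_append]
      omega
    have hsplit : s ++ (u ++ v) ++ t = (s ++ u) ++ (v ++ t) := by simp only [List.append_assoc]
    refine ⟨hk, s, t, ?_⟩
    rw [insertIdx_eq_take_append_cons_drop hk, hsplit, ← List.length_append, List.take_left,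
      List.drop_left]
    simp

end ContiguousSubwords

section Rankings

variable {n : ℕ} {A B C : Finset (Fin n)} {b : Fin n} {σ τ w : Word n}

theorem mem_rankings : w ∈ rankings n A ↔ IsRanking A w := by
  rw [rankings, List.mem_toFinset, List.mem_permutations]
  refine ⟨fun h => ⟨h.nodup_iff.2 A.nodup_toList, ?_⟩, ?_⟩
  · rw [List.toFinset_eq_of_perm _ _ h, toList_toFinset]
  · rintro ⟨h, rfl⟩
    exact (List.toFinset_toList h).symm

theorem mem_allWords : w ∈ allWords n ↔ w.Nodup := by
  simp [allWords, mem_rankings, IsRanking]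

theorem mem_Pbar : B ∈ Pbar A ↔ B ⊆ A ∧ (2 ≤ B.card ∨ B = ∅) := by
  simp [Pbar]

theorem self_mem_Pbar (hA : 2 ≤ A.card) : A ∈ Pbar A :=
  mem_Pbar.2 ⟨subset_rfl, .inl hA⟩

theorem self_mem_Pbar_of_mem (hB : B ∈ Pbar A) : B ∈ Pbar B :=
  mem_Pbar.2 ⟨subset_rfl, (mem_Pbar.1 hB).2⟩

theorem empty_mem_Pbar : ∅ ∈ Pbar A :=
  mem_Pbar.2 ⟨empty_subset A, .inr rfl⟩

theorem Pbar_mono (h : B ⊆ A) : Pbar B ⊆ Pbar A :=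
  fun _ hD => mem_Pbar.2 ⟨(mem_Pbar.1 hD).1.trans h, (mem_Pbar.1 hD).2⟩

namespace IsRanking

theorem mem_iff (h : IsRanking A w) {a : Fin n} : a ∈ w ↔ a ∈ A := by
  rw [← h.2, List.mem_toFinset]

theorem length_eq (h : IsRanking A w) : w.length = A.card := by
  rw [← h.2, List.toFinset_card_of_nodup h.1]

theorem eq_of_sublist (hσ : IsRanking A σ) (hτ : IsRanking A τ) (h : τ <+ σ) : τ = σ :=
  h.eq_of_length (hτ.length_eq.trans hσ.length_eq.symm)

theorem eq_of_card_le_one (hA : A.card ≤ 1) (hσ : IsRanking A σ) (hτ : IsRanking A τ) :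
    σ = τ := by
  have hperm : σ.Perm τ :=
    List.perm_of_nodup_nodup_toFinset_eq hσ.1 hτ.1 (hσ.2.trans hτ.2.symm)
  have hlength := hσ.length_eq.trans_le hA
  match σ with
  | [] => exact hperm.nil_eq
  | [a] => exact hperm.singleton_eq
  | a :: b :: σ => simp at hlength

protected theorem restrictWord (hσ : IsRanking A σ) (C : Finset (Fin n)) :
    IsRanking (A ∩ C) (restrictWord σ C) := by
  refine ⟨hσ.1.filter _, ?_⟩
  ext x
  simp [restrictWord, hσ.mem_iff]

theorem restrictWord_of_subset (hσ : IsRanking A σ) (hB : B ⊆ A) :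
    IsRanking B (restrictWord σ B) := by
  simpa only [inter_eq_right.2 hB] using hσ.restrictWord B

protected theorem insertIdx {k : ℕ} (hb : b ∉ C) (hτ : IsRanking C τ) (hk : k ≤ τ.length) :
    IsRanking (insert b C) (τ.insertIdx k b) := by
  have hperm := List.perm_insertIdx b τ hk
  refine ⟨hperm.nodup_iff.2 (List.nodup_cons.2 ⟨mt hτ.mem_iff.1 hb, hτ.1⟩), ?_⟩
  rw [List.toFinset_eq_of_perm _ _ hperm, List.toFinset_cons, hτ.2]

end IsRanking

theorem nodup_restrictWord (hσ : σ.Nodup) (C : Finset (Fin n)) : (restrictWord σ C).Nodup :=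
  hσ.filter _

theorem toFinset_restrictWord_subset (σ : Word n) (C : Finset (Fin n)) :
    (restrictWord σ C).toFinset ⊆ C := fun x hx => by
  simp only [restrictWord, List.mem_toFinset, List.mem_filter, decide_eq_true_eq] at hx
  exact hx.2

theorem restrictWord_eq_self (h : σ.toFinset ⊆ C) : restrictWord σ C = σ :=
  List.filter_eq_self.2 fun _ ha => by simpa using h (List.mem_toFinset.2 ha)

theorem restrictWord_restrictWord (h : B ⊆ C) (σ : Word n) :
    restrictWord (restrictWord σ C) B = restrictWord σ B := by
  rw [restrictWord, restrictWord, List.filter_filter]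
  refine List.filter_congr fun x _ => ?_
  by_cases hx : x ∈ B
  · simp [hx, h hx]
  · simp [hx]

theorem IsRanking.restrictWord_inter (hσ : IsRanking A σ) (B : Finset (Fin n)) :
    restrictWord σ (A ∩ B) = restrictWord σ B := by
  refine List.filter_congr fun x hx => ?_
  simp [hσ.mem_iff.1 hx]

theorem IsRanking.sublist_iff_eq_restrictWord (hσ : IsRanking A σ) (hB : B ⊆ A)
    (hτ : IsRanking B τ) : τ <+ σ ↔ τ = restrictWord σ B := by
  refine ⟨fun h => ?_, fun h => h ▸ List.filter_sublist⟩
  refine (hσ.restrictWord_of_subset hB).eq_of_sublist hτ ?_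
  rw [← restrictWord_eq_self hτ.2.subset]
  exact h.filter _

theorem IsRanking.exists_insertIdx_of_sublist (hb : b ∉ C) (hσ : IsRanking (insert b C) σ)
    (hτ : IsRanking C τ) (h : τ <+ σ) : ∃ k ≤ τ.length, τ.insertIdx k b = σ := by
  obtain ⟨s, t, -, rfl, hst⟩ := List.exists_erase_eq (hσ.mem_iff.2 (mem_insert_self b C))
  have hsub : τ <+ s ++ t := by
    simpa only [List.erase_of_not_mem (mt hτ.mem_iff.1 hb), hst] using h.erase b
  have hlen : τ.length = (s ++ t).length := by
    have := hσ.length_eq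
    rw [card_insert_of_notMem hb, ← hτ.length_eq] at this
    simp only [List.length_append, List.length_cons] at this ⊢
    omega
  obtain rfl := hsub.eq_of_length hlen
  exact ⟨s.length, by simp, by rw [insertIdx_eq_take_append_cons_drop (by simp)]; simp⟩

end Rankings

section Operators

variable {n : ℕ} {A B C D : Finset (Fin n)} {F : Word n → ℝ} {σ τ p : Word n}

theorem memL_dirac (hp : IsRanking A p) : MemL A (dirac p) := by
  intro w hw
  rcases eq_or_ne w p with rfl | hne
  · exact hp
  · simp [dirac, hne] at hw

theorem memL_marg (B : Finset (Fin n)) (F : Word n → ℝ) : MemL B (marg B F) :=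
  fun _ hw => by_contra fun h => hw (if_neg h)

theorem memL_synth (B : Finset (Fin n)) (F : Word n → ℝ) : MemL B (synth B F) :=
  fun _ hw => by_contra fun h => hw (if_neg h)

namespace MemL

theorem apply_eq_zero (hF : MemL A F) (h : ¬ IsRanking A σ) : F σ = 0 :=
  by_contra fun hσ => h (hF σ hσ)

theorem ext {G : Word n → ℝ} (hF : MemL A F) (hG : MemL A G)
    (h : ∀ σ, IsRanking A σ → F σ = G σ) : F = G := by
  ext σ
  by_cases hσ : IsRanking A σ
  · exact h σ hσ
  · rw [hF.apply_eq_zero hσ, hG.apply_eq_zero hσ]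

theorem eq_sum_dirac (hF : MemL A F) : F = ∑ p ∈ rankings n A, F p • dirac p := by
  ext σ
  simp only [Finset.sum_apply, Pi.smul_apply, smul_eq_mul, dirac, mul_ite, mul_one, mul_zero,
    sum_ite_eq, mem_rankings]
  split_ifs with h
  · rfl
  · exact hF.apply_eq_zero h

theorem linearMap_ext {f g : (Word n → ℝ) →ₗ[ℝ] Word n → ℝ}
    (h : ∀ p, IsRanking A p → f (dirac p) = g (dirac p)) (hF : MemL A F) : f F = g F := by
  rw [hF.eq_sum_dirac, map_sum, map_sum]
  refine sum_congr rfl fun p hp => ?_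
  rw [map_smul, map_smul, h p (mem_rankings.1 hp)]

end MemL

/-- The marginal operator `M_B`, bundled as an endomorphism of the space of all functions on
words. -/
noncomputable def margLinearMap (B : Finset (Fin n)) : (Word n → ℝ) →ₗ[ℝ] Word n → ℝ where
  toFun := marg B
  map_add' F G := by
    ext π
    simp only [marg, Pi.add_apply]
    split_ifs
    · rw [← sum_add_distrib]
      exact sum_congr rfl fun σ _ => by split_ifs <;> simp
    · simp
  map_smul' c F := by
    ext π
    simp only [marg, Pi.smul_apply, smul_eq_mul, mul_sum, mul_ite, mul_zero, RingHom.id_apply]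

/-- The synthesis operator `φ_B`, bundled as an endomorphism of the space of all functions on
words. -/
noncomputable def synthLinearMap (B : Finset (Fin n)) : (Word n → ℝ) →ₗ[ℝ] Word n → ℝ where
  toFun := synth B
  map_add' F G := by
    ext σ
    simp only [synth, Pi.add_apply]
    split_ifs
    · rw [add_add_add_comm, ← sum_add_distrib, add_div]
      congr 1
      exact sum_congr rfl fun π _ => by split_ifs <;> simp [add_div]
    · simp
  map_smul' c F := by
    ext σ
    simp only [synth, Pi.smul_apply, smul_eq_mul, mul_sum, mul_ite, mul_zero, RingHom.id_apply,
      mul_add, mul_div_assoc]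

@[simp]
theorem margLinearMap_apply (B : Finset (Fin n)) (F : Word n → ℝ) :
    margLinearMap B F = marg B F :=
  rfl

@[simp]
theorem synthLinearMap_apply (B : Finset (Fin n)) (F : Word n → ℝ) :
    synthLinearMap B F = synth B F :=
  rfl

theorem marg_dirac (hp : IsRanking A p) (hB : B ⊆ A) :
    marg B (dirac p) = dirac (restrictWord p B) := by
  refine (memL_marg _ _).ext (memL_dirac (hp.restrictWord_of_subset hB)) fun τ hτ => ?_
  have hsum : ∑ σ ∈ allWords n, (if τ <+ σ then dirac p σ else 0) = if τ <+ p then 1 else 0 := by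
    rw [sum_eq_single_of_mem p (mem_allWords.2 hp.1) fun σ _ hne => by simp [dirac, hne]]
    simp [dirac]
  rw [marg, if_pos hτ, hsum]
  simp only [hp.sublist_iff_eq_restrictWord hB hτ, dirac]

theorem marg_self (hF : MemL A F) : marg A F = F :=
  hF.linearMap_ext (f := margLinearMap A) (g := LinearMap.id) fun p hp => by
    simp [marg_dirac hp subset_rfl, restrictWord_eq_self hp.2.subset]

theorem marg_marg (hF : MemL A F) (hBA : B ⊆ A) (hCB : C ⊆ B) :
    marg C (marg B F) = marg C F :=
  hF.linearMap_ext (f := margLinearMap C ∘ₗ margLinearMap B) (g := margLinearMap C) fun p hp => by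
    simp [marg_dirac hp hBA, marg_dirac (hp.restrictWord_of_subset hBA) hCB,
      marg_dirac hp (hCB.trans hBA), restrictWord_restrictWord hCB]

theorem marg_insert_apply {b : Fin n} (hb : b ∉ C) (hF : MemL (insert b C) F)
    (hτ : IsRanking C τ) :
    marg C F τ = ∑ k ∈ range (τ.length + 1), F (τ.insertIdx k b) := by
  rw [marg, if_pos hτ, ← sum_filter]
  have hinj : Set.InjOn (fun k => τ.insertIdx k b) (range (τ.length + 1)) := by
    refine (List.injOn_insertIdx_index_of_notMem τ b (mt hτ.mem_iff.1 hb)).mono fun k hk => ?_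
    simpa [Nat.lt_succ_iff] using hk
  rw [← sum_image hinj]
  refine (sum_subset (fun σ hσ => ?_) fun σ hσ hσ' => ?_).symm
  · obtain ⟨k, hk, rfl⟩ := mem_image.1 hσ
    rw [mem_range, Nat.lt_succ_iff] at hk
    exact mem_filter.2 ⟨mem_allWords.2 (hτ.insertIdx hb hk).1, List.sublist_insertIdx _ _ _⟩
  · refine hF.apply_eq_zero fun h => hσ' ?_
    obtain ⟨k, hk, rfl⟩ := h.exists_insertIdx_of_sublist hb hτ (mem_filter.1 hσ).2
    exact mem_image_of_mem _ (mem_range.2 (Nat.lt_succ_of_le hk))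

-- The truncated subtraction `|p| - 1` covers the empty word as well as the nonempty ones.
theorem synth_dirac_apply (hσ : IsRanking A σ) (hp : p.Nodup) :
    synth A (dirac p) σ =
      if p <:+: σ then ((A.card - (p.length - 1)).factorial : ℝ)⁻¹ else 0 := by
  rw [synth, if_pos hσ, sum_eq_single_of_mem p (mem_allWords.2 hp)
    fun w _ hne => by simp [dirac, hne]]
  rcases eq_or_ne p [] with rfl | hne
  · simp [dirac]
  · by_cases hpσ : p <:+: σ
    · have hexp : A.card - p.length + 1 = A.card - (p.length - 1) := by
        have := hpσ.length_le.trans_eq hσ.length_eq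
        have := List.length_pos_iff.2 hne
        omega
      simp [dirac, hne, hne.symm, hpσ, hexp]
    · simp [dirac, hne.symm, hpσ]

theorem synth_self (hF : MemL A F) : synth A F = F := by
  refine hF.linearMap_ext (f := synthLinearMap A) (g := LinearMap.id) fun p hp => ?_
  refine (memL_synth _ _).ext (memL_dirac hp) fun σ hσ => ?_
  have hiff : p <:+: σ ↔ σ = p :=
    ⟨fun h => (hσ.eq_of_sublist hp h.sublist).symm, fun h => h ▸ List.infix_rfl⟩
  have hfact : (A.card - (p.length - 1)).factorial = 1 := by
    rw [hp.length_eq, Nat.factorial_eq_one]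
    omega
  simp [synth_dirac_apply hσ hp.1, hiff, hfact, dirac]

theorem restrictWord_append_cons {b : Fin n} (hb : b ∉ C) {u v : Word n}
    (h : (u ++ v).toFinset ⊆ C) : restrictWord (u ++ b :: v) C = u ++ v := by
  rw [← restrictWord_eq_self h]
  simp [restrictWord, hb]

theorem succ_mul_inv_factorial_succ (m : ℕ) :
    ((m + 1 : ℕ) : ℝ) * ((m + 1).factorial : ℝ)⁻¹ = (m.factorial : ℝ)⁻¹ := by
  rw [Nat.factorial_succ, Nat.cast_mul, mul_inv,
    mul_inv_cancel_left₀ (Nat.cast_ne_zero.2 m.succ_ne_zero)]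

theorem card_mul_inv_factorial_of_notMem {b : Fin n} (hb : b ∉ C) (hτ : IsRanking C τ)
    (hbp : b ∉ p) :
    (#{k ∈ range (τ.length + 1) | p <:+: τ.insertIdx k b} : ℝ) *
        (((insert b C).card - (p.length - 1)).factorial : ℝ)⁻¹ =
      if p <:+: τ then ((C.card - (p.length - 1)).factorial : ℝ)⁻¹ else 0 := by
  split_ifs with h
  · have hle := h.length_le.trans_eq hτ.length_eq
    have hsucc : (insert b C).card - (p.length - 1) = C.card - (p.length - 1) + 1 := by
      rw [card_insert_of_notMem hb]
      omega
    rw [card_infix_insertIdx_of_notMem hτ.1 hbp h, hτ.length_eq, hsucc,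
      succ_mul_inv_factorial_succ]
  · have hempty : {k ∈ range (τ.length + 1) | p <:+: τ.insertIdx k b} = ∅ := by
      refine filter_eq_empty_iff.2 fun k hk hinfix => h ?_
      rw [mem_range, Nat.lt_succ_iff] at hk
      rw [insertIdx_eq_take_append_cons_drop hk, infix_append_cons_iff_of_notMem hbp] at hinfix
      exact hinfix.elim (·.trans (List.take_prefix _ _).isInfix)
        (·.trans (List.drop_suffix _ _).isInfix)
    rw [hempty, card_empty, Nat.cast_zero, zero_mul]

theorem card_mul_inv_factorial_of_mem {b : Fin n} (hb : b ∉ C) (hτ : IsRanking C τ)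
    (u v : Word n) :
    (#{k ∈ range (τ.length + 1) | u ++ b :: v <:+: τ.insertIdx k b} : ℝ) *
        (((insert b C).card - ((u ++ b :: v).length - 1)).factorial : ℝ)⁻¹ =
      if u ++ v <:+: τ then ((C.card - ((u ++ v).length - 1)).factorial : ℝ)⁻¹ else 0 := by
  have hbτ : b ∉ τ := mt hτ.mem_iff.1 hb
  have hcard : (insert b C).card = τ.length + 1 := by
    rw [card_insert_of_notMem hb, hτ.length_eq]
  rw [hcard, ← hτ.length_eq]
  split_ifs with h
  · rcases eq_or_ne (u ++ v) [] with hnil | hne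
    · obtain ⟨rfl, rfl⟩ := List.append_eq_nil_iff.1 hnil
      have hall : ∀ k ∈ range (τ.length + 1), [] ++ [b] <:+: τ.insertIdx k b := fun k hk => by
        rw [mem_range, Nat.lt_succ_iff] at hk
        rw [List.nil_append, List.singleton_infix_iff, List.mem_insertIdx hk]
        exact .inl rfl
      rw [filter_true_of_mem hall, card_range]
      exact succ_mul_inv_factorial_succ τ.length
    · have hexp : τ.length + 1 - ((u ++ b :: v).length - 1) = τ.length - ((u ++ v).length - 1) := by
        have := List.length_pos_iff.2 hne
        simp only [List.length_append, List.length_cons] at this ⊢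
        omega
      rw [card_infix_insertIdx_of_mem hτ.1 hbτ hne h, Nat.cast_one, one_mul, hexp]
  · have hempty : {k ∈ range (τ.length + 1) | u ++ b :: v <:+: τ.insertIdx k b} = ∅ := by
      refine filter_eq_empty_iff.2 fun k hk hinfix => h ?_
      rw [mem_range, Nat.lt_succ_iff] at hk
      rw [insertIdx_eq_take_append_cons_drop hk, append_cons_infix_append_cons_iff
        (fun h => hbτ (List.mem_of_mem_take h)) (fun h => hbτ (List.mem_of_mem_drop h))] at hinfix
      obtain ⟨⟨s, hs⟩, ⟨t, ht⟩⟩ := hinfix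
      exact ⟨s, t, by rw [← List.take_append_drop k τ, ← hs, ← ht]; simp⟩
    rw [hempty, card_empty, Nat.cast_zero, zero_mul]

theorem marg_synth_dirac_insert {b : Fin n} (hb : b ∉ C) (hp : p.Nodup)
    (hpC : p.toFinset ⊆ insert b C) :
    marg C (synth (insert b C) (dirac p)) = synth C (dirac (restrictWord p C)) := by
  refine (memL_marg _ _).ext (memL_synth _ _) fun τ hτ => ?_
  have hsynth : ∀ k ∈ range (τ.length + 1), synth (insert b C) (dirac p) (τ.insertIdx k b) =
      if p <:+: τ.insertIdx k b then
        (((insert b C).card - (p.length - 1)).factorial : ℝ)⁻¹ else 0 := fun k hk =>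
    synth_dirac_apply (hτ.insertIdx hb (Nat.lt_succ_iff.1 (mem_range.1 hk))) hp
  rw [marg_insert_apply hb (memL_synth _ _) hτ, sum_congr rfl hsynth, ← sum_filter, sum_const,
    nsmul_eq_mul, synth_dirac_apply hτ (nodup_restrictWord hp C)]
  by_cases hbp : b ∈ p
  · obtain ⟨u, v, rfl⟩ := List.append_of_mem hbp
    have huv : (u ++ v).toFinset ⊆ C := fun x hx => by
      have hxb : x ≠ b := by
        rintro rfl
        exact (List.nodup_cons.1 (List.nodup_middle.1 hp)).1 (List.mem_toFinset.1 hx)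
      have := @hpC x
      simp only [List.mem_toFinset, List.mem_append, List.mem_cons, mem_insert, hxb,
        false_or] at this hx
      exact this hx
    rw [restrictWord_append_cons hb huv]
    exact card_mul_inv_factorial_of_mem hb hτ u v
  · have hpC' : p.toFinset ⊆ C :=
      (subset_insert_iff_of_notMem (by simpa using hbp)).1 hpC
    rw [restrictWord_eq_self hpC']
    exact card_mul_inv_factorial_of_notMem hb hτ hbp

theorem marg_synth_dirac (hp : p.Nodup) (hpB : p.toFinset ⊆ B) (hCB : C ⊆ B) :
    marg C (synth B (dirac p)) = synth C (dirac (restrictWord p C)) := by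
  induction B using Finset.strongInduction generalizing p with
  | H B ih =>
    rcases hCB.eq_or_ssubset with rfl | hss
    · rw [marg_self (memL_synth _ _), restrictWord_eq_self hpB]
    · obtain ⟨b, hbB, hbC⟩ := exists_of_ssubset hss
      have hCb : C ⊆ B.erase b := subset_erase.2 ⟨hCB, hbC⟩
      have hstep : marg (B.erase b) (synth B (dirac p)) =
          synth (B.erase b) (dirac (restrictWord p (B.erase b))) := by
        have hins := insert_erase hbB
        simpa only [hins] using
          marg_synth_dirac_insert (notMem_erase b B) hp (hins.symm ▸ hpB)
      calc marg C (synth B (dirac p))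
          = marg C (marg (B.erase b) (synth B (dirac p))) :=
            (marg_marg (memL_synth _ _) (erase_subset b B) hCb).symm
        _ = marg C (synth (B.erase b) (dirac (restrictWord p (B.erase b)))) := by rw [hstep]
        _ = synth C (dirac (restrictWord p C)) := by
            rw [ih _ (erase_ssubset hbB) (nodup_restrictWord hp _)
              (toFinset_restrictWord_subset p _) hCb, restrictWord_restrictWord hCb]

theorem marg_synth (hF : MemL A F) (hA : A ⊆ B) (hC : C ⊆ B) :
    marg C (synth B F) = synth C (marg (A ∩ C) F) :=
  hF.linearMap_ext (f := margLinearMap C ∘ₗ synthLinearMap B)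
    (g := synthLinearMap C ∘ₗ margLinearMap (A ∩ C)) fun p hp => by
      simp [marg_dirac hp inter_subset_left, hp.restrictWord_inter,
        marg_synth_dirac hp.1 (hp.2.trans_subset hA) hC]

theorem MemH.marg_eq_zero (hF : MemH A F) (hA : 2 ≤ A.card) (hD : D ⊂ A) : marg D F = 0 := by
  by_cases hD2 : 2 ≤ D.card
  · exact hF.2.1 D hD hD2
  have hsum : marg D F = ∑ p ∈ rankings n A, F p • dirac (restrictWord p D) := by
    conv_lhs => rw [hF.1.eq_sum_dirac, ← margLinearMap_apply, map_sum]
    exact sum_congr rfl fun p hp => by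
      rw [map_smul, margLinearMap_apply, marg_dirac (mem_rankings.1 hp) hD.subset]
  obtain hempty | ⟨q, hq⟩ := (rankings n A).eq_empty_or_nonempty
  · rw [hsum, hempty, sum_empty]
  have hconst : ∀ p ∈ rankings n A, F p • dirac (restrictWord p D) =
      F p • dirac (restrictWord q D) := fun p hp => by
    rw [((mem_rankings.1 hp).restrictWord_of_subset hD.subset).eq_of_card_le_one (by omega)
      ((mem_rankings.1 hq).restrictWord_of_subset hD.subset)]
  rw [hsum, sum_congr rfl hconst, ← sum_smul, hF.2.2 hA, zero_smul]

theorem MemH.marg_synth (hF : MemH A F) (hA : A ∈ Pbar B) (hC : C ⊆ B) :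
    marg C (synth B F) = if A ⊆ C then synth C F else 0 := by
  obtain ⟨hAB, hA⟩ := mem_Pbar.1 hA
  rw [_root_.marg_synth hF.1 hAB hC]
  split_ifs with h
  · rw [inter_eq_left.2 h, marg_self hF.1]
  · have hA2 : 2 ≤ A.card := hA.resolve_right fun h0 => h (h0 ▸ empty_subset C)
    have hss : A ∩ C ⊂ A := inter_subset_left.ssubset_of_ne (mt inter_eq_left.1 h)
    rw [hF.marg_eq_zero hA2 hss, ← synthLinearMap_apply, map_zero]

end Operators

section Subwords

variable {α : Type*} {l w : List α} {i j i' j' : ℕ}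

/-- The contiguous subword `l_i … l_j` of `l`, both ends included and positions counted from `0`;
meaningful for `i ≤ j < l.length`. -/
def subword (l : List α) (i j : ℕ) : List α :=
  (l.drop i).take (j - i + 1)

theorem length_subword (hij : i ≤ j) (hj : j < l.length) :
    (subword l i j).length = j - i + 1 := by
  simp only [subword, List.length_take, List.length_drop]
  omega

theorem take_append_subword_append_drop (l : List α) (hij : i ≤ j) :
    l.take i ++ subword l i j ++ l.drop (j + 1) = l := by
  have hdrop : l.drop (j + 1) = (l.drop i).drop (j - i + 1) := by
    rw [List.drop_drop]
    congr 1
    omega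
  rw [hdrop, List.append_assoc, subword, List.take_append_drop, List.take_append_drop]

theorem subword_infix (l : List α) (hij : i ≤ j) : subword l i j <:+: l :=
  ⟨_, _, take_append_subword_append_drop l hij⟩

theorem exists_subword_eq (hw : w ≠ []) (h : w <:+: l) :
    ∃ i j, i ≤ j ∧ j < l.length ∧ subword l i j = w := by
  obtain ⟨s, t, rfl⟩ := h
  have hlen := List.length_pos_iff.2 hw
  have hexp : s.length + (w.length - 1) - s.length + 1 = w.length := by omega
  refine ⟨s.length, s.length + (w.length - 1), by omega, ?_, ?_⟩
  · simp only [List.length_append]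
    omega
  · rw [subword, List.append_assoc, List.drop_left, hexp, List.take_left]

theorem subword_inj (hl : l.Nodup) (hij : i ≤ j) (hj : j < l.length) (hij' : i' ≤ j')
    (hj' : j' < l.length) (h : subword l i j = subword l i' j') : i = i' ∧ j = j' := by
  have hlen := congrArg List.length h
  rw [length_subword hij hj, length_subword hij' hj'] at hlen
  have hne : subword l i j ≠ [] := List.length_pos_iff.1 (by rw [length_subword hij hj]; omega)
  have hsplit := take_append_subword_append_drop l hij
  have hsplit' := take_append_subword_append_drop l hij'
  rw [← h] at hsplit'
  have htake := (append_append_inj_of_nodup hne (hsplit.symm ▸ hl) (hsplit.trans hsplit'.symm)).1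
  have := congrArg List.length htake
  rw [List.length_take, List.length_take] at this
  omega

theorem subword_zero_length_sub_one (hl : l ≠ []) : subword l 0 (l.length - 1) = l := by
  rw [subword, List.drop_zero, Nat.sub_zero, Nat.sub_add_cancel (List.length_pos_iff.2 hl),
    List.take_length]

variable {M : Type*} [AddCommMonoid M] {n : ℕ} {π : Word n}

theorem sum_infix_eq_sum_subword (hπ : π.Nodup) (f : Word n → M) :
    ∑ p ∈ allWords n, (if p ≠ [] ∧ p <:+: π then f p else 0) =
      ∑ i ∈ range π.length, ∑ j ∈ range π.length, if i ≤ j then f (subword π i j) else 0 := by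
  rw [← sum_product' (f := fun i j => if i ≤ j then f (subword π i j) else 0), ← sum_filter,
    ← sum_filter]
  symm
  refine sum_nbij (fun x => subword π x.1 x.2) ?_ ?_ ?_ fun _ _ => rfl
  · rintro ⟨i, j⟩ h
    obtain ⟨⟨-, hj⟩, hij⟩ := by simpa using h
    have hinfix := subword_infix π hij
    refine mem_filter.2 ⟨mem_allWords.2 (hinfix.sublist.nodup hπ), fun hnil => ?_, hinfix⟩
    have := length_subword hij hj
    rw [hnil] at this
    simp at this
  · rintro ⟨i, j⟩ h ⟨i', j'⟩ h' heq
    obtain ⟨⟨-, hj⟩, hij⟩ := by simpa using h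
    obtain ⟨⟨-, hj'⟩, hij'⟩ := by simpa using h'
    exact Prod.ext_iff.2 (subword_inj hπ hij hj hij' hj' heq)
  · intro p hp
    obtain ⟨-, hne, hinfix⟩ := by simpa using hp
    obtain ⟨i, j, hij, hj, rfl⟩ := exists_subword_eq hne hinfix
    exact ⟨(i, j), by simp [hij, hj, hij.trans_lt hj], rfl⟩

theorem sum_infix_eq_add_sum_subword (hπ : π.Nodup) (hlen : 2 ≤ π.length) {f : Word n → M}
    (hf : ∀ p, p.length = 1 → f p = 0) :
    ∑ p ∈ allWords n, (if p ≠ [] ∧ p <:+: π then f p else 0) =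
      f π + ∑ i ∈ range π.length, ∑ j ∈ range π.length,
        if i < j ∧ j - i < π.length - 1 then f (subword π i j) else 0 := by
  have hsplit : ∀ i ∈ range π.length, ∀ j ∈ range π.length,
      (if i ≤ j then f (subword π i j) else 0) =
        (if i = 0 ∧ j = π.length - 1 then f π else 0) +
          if i < j ∧ j - i < π.length - 1 then f (subword π i j) else 0 := by
    intro i _ j hj
    rw [mem_range] at hj
    by_cases hfull : i = 0 ∧ j = π.length - 1
    · obtain ⟨rfl, rfl⟩ := hfull
      simp [subword_zero_length_sub_one (List.length_pos_iff.1 (zero_lt_two.trans_le hlen))]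
    rw [if_neg hfull, zero_add]
    rcases lt_trichotomy i j with hij | rfl | hij
    · have hproper : j - i < π.length - 1 := by omega
      rw [if_pos hij.le, if_pos ⟨hij, hproper⟩]
    · rw [if_pos le_rfl, if_neg (by simp), hf _ (by rw [length_subword le_rfl hj]; simp)]
    · rw [if_neg hij.not_ge, if_neg (by omega)]
  have hmem : 0 ∈ range π.length ∧ π.length - 1 ∈ range π.length := by
    simp only [mem_range]
    omega
  rw [sum_infix_eq_sum_subword hπ, sum_congr rfl fun i hi => sum_congr rfl (hsplit i hi)]
  simp only [sum_add_distrib, ite_and, sum_ite_irrel, sum_const_zero, sum_ite_eq', if_pos hmem.1,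
    if_pos hmem.2]

end Subwords

section Multiresolution

variable {n : ℕ} {B C : Finset (Fin n)} {F : Word n → ℝ} {X Y : Finset (Fin n) → Word n → ℝ}
  {p π : Word n} {i j : ℕ}

/-- `X` is a multiresolution decomposition of `F ∈ L(Γ(B))`: components `X D ∈ H_D` for
`D ∈ P̄(B)` whose syntheses `φ_B (X D)` add up to `F`. The values of `X` outside `P̄(B)` are
irrelevant. -/
def IsMultiresolution (B : Finset (Fin n)) (F : Word n → ℝ)
    (X : Finset (Fin n) → Word n → ℝ) : Prop :=
  (∀ D ∈ Pbar B, MemH D (X D)) ∧ F = ∑ D ∈ Pbar B, synth B (X D)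

theorem two_le_card_toFinset_subword (hπ : π.Nodup) (hij : i < j) (hj : j < π.length) :
    2 ≤ (subword π i j).toFinset.card := by
  rw [List.toFinset_card_of_nodup ((subword_infix π hij.le).sublist.nodup hπ),
    length_subword hij.le hj]
  omega

theorem toFinset_subword_mem_Pbar (hπ : IsRanking B π) (hij : i < j) (hj : j < π.length) :
    (subword π i j).toFinset ∈ Pbar B := by
  refine mem_Pbar.2 ⟨fun a ha => ?_, .inl (two_le_card_toFinset_subword hπ.1 hij hj)⟩
  exact hπ.mem_iff.1 ((subword_infix π hij.le).subset (List.mem_toFinset.1 ha))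

theorem sum_Pbar_apply (hX : ∀ D ∈ Pbar B, MemL D (X D)) (w : Word n) :
    (∑ D ∈ Pbar B, X D) w = if w.toFinset ∈ Pbar B then X w.toFinset w else 0 := by
  rw [Finset.sum_apply, ← sum_ite_eq (Pbar B) w.toFinset fun D => X D w]
  refine sum_congr rfl fun D hD => ?_
  split_ifs with h
  · rfl
  · exact (hX D hD).apply_eq_zero fun hw => h hw.2

namespace IsMultiresolution

protected theorem marg (h : IsMultiresolution B F X) (hC : C ⊆ B) :
    IsMultiresolution C (marg C F) X := by
  refine ⟨fun D hD => h.1 D (Pbar_mono hC hD), ?_⟩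
  have hfilter : {D ∈ Pbar B | D ⊆ C} = Pbar C := by
    ext D
    simp only [mem_filter, mem_Pbar]
    exact ⟨fun hD => ⟨hD.2, hD.1.2⟩, fun hD => ⟨⟨hD.1.trans hC, hD.2⟩, hD.1⟩⟩
  calc marg C F = ∑ D ∈ Pbar B, marg C (synth B (X D)) := by
        rw [h.2, ← margLinearMap_apply, map_sum]
        rfl
    _ = ∑ D ∈ Pbar B, if D ⊆ C then synth C (X D) else 0 :=
        sum_congr rfl fun D hD => (h.1 D hD).marg_synth hD hC
    _ = ∑ D ∈ Pbar C, synth C (X D) := by rw [← sum_filter, hfilter]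

theorem marg_eq_add_sum (h : IsMultiresolution B F X) (hC : C ∈ Pbar B) :
    _root_.marg C F = X C + ∑ D ∈ (Pbar C).erase C, synth C (X D) := by
  rw [(h.marg (mem_Pbar.1 hC).1).2, ← add_sum_erase _ _ (self_mem_Pbar_of_mem hC),
    synth_self (h.1 C hC).1]

theorem empty_eq_marg (h : IsMultiresolution B F X) : X ∅ = _root_.marg ∅ F := by
  have hPbar : Pbar (∅ : Finset (Fin n)) = {∅} := by
    ext D
    simp +contextual [mem_Pbar]
  rw [h.marg_eq_add_sum empty_mem_Pbar, hPbar, erase_singleton,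
    sum_empty, add_zero]

theorem unique (hX : IsMultiresolution B F X) (hY : IsMultiresolution B F Y) (hC : C ∈ Pbar B) :
    X C = Y C := by
  induction C using Finset.strongInduction with
  | H C ih =>
    have hlower : ∑ D ∈ (Pbar C).erase C, synth C (X D) =
        ∑ D ∈ (Pbar C).erase C, synth C (Y D) := sum_congr rfl fun D hD => by
      obtain ⟨hne, hD⟩ := mem_erase.1 hD
      rw [ih D ((mem_Pbar.1 hD).1.ssubset_of_ne hne) (Pbar_mono (mem_Pbar.1 hC).1 hD)]
    have hmarg := (hX.marg_eq_add_sum hC).symm.trans (hY.marg_eq_add_sum hC)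
    rw [hlower] at hmarg
    exact add_right_cancel hmarg

theorem eq_synth_sum (h : IsMultiresolution B F X) : F = synth B (∑ D ∈ Pbar B, X D) := by
  rw [h.2, ← synthLinearMap_apply, map_sum]
  rfl

theorem apply_eq_add_sum_subword (h : IsMultiresolution B F X) (hB : 2 ≤ B.card)
    (hπ : IsRanking B π) :
    F π = X ∅ [] / (B.card.factorial : ℝ) + (X B π +
      ∑ i ∈ range π.length, ∑ j ∈ range π.length,
        if i < j ∧ j - i < π.length - 1 then
          X (subword π i j).toFinset (subword π i j) / ((π.length - j + i).factorial : ℝ)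
        else 0) := by
  set Z := ∑ D ∈ Pbar B, X D with hZ
  have hZ_apply : ∀ w : Word n, Z w = if w.toFinset ∈ Pbar B then X w.toFinset w else 0 :=
    sum_Pbar_apply fun D hD => (h.1 D hD).1
  have hZ_nil : Z [] = X ∅ [] := by
    rw [hZ_apply, List.toFinset_nil, if_pos empty_mem_Pbar]
  have hZ_singleton : ∀ p : Word n, p.length = 1 → Z p = 0 := fun p hp => by
    obtain ⟨a, rfl⟩ := List.length_eq_one_iff.1 hp
    rw [hZ_apply, if_neg (by simp [mem_Pbar])]
  have hZ_self : Z π = X B π := by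
    rw [hZ_apply, hπ.2, if_pos (self_mem_Pbar hB)]
  rw [h.eq_synth_sum, ← hZ, synth, if_pos hπ, hZ_nil,
    sum_infix_eq_add_sum_subword hπ.1 (hπ.length_eq ▸ hB)
    (f := fun p => Z p / ((B.card - p.length + 1).factorial : ℝ))
    fun p hp => by rw [hZ_singleton p hp, zero_div]]
  congr 2
  · simp [hZ_self, hπ.length_eq]
  · refine sum_congr rfl fun i _ => sum_congr rfl fun j hj => ?_
    rw [mem_range] at hj
    refine if_ctx_congr Iff.rfl (fun hij => ?_) fun _ => rfl
    have hexp : B.card - (j - i + 1) + 1 = π.length - j + i := by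
      rw [← hπ.length_eq]
      omega
    rw [hZ_apply, if_pos (toFinset_subword_mem_Pbar hπ hij.1 hj), length_subword hij.1.le hj, hexp]

theorem eq_of_dirac (hX : IsMultiresolution B (dirac p) X) (hp : IsRanking B p)
    (hC : C ∈ Pbar B) (hY : IsMultiresolution C (dirac (restrictWord p C)) Y) : X C = Y C := by
  have hCB := (mem_Pbar.1 hC).1
  have hmarg := hX.marg hCB
  rw [marg_dirac hp hCB] at hmarg
  exact hmarg.unique hY (self_mem_Pbar_of_mem hC)

theorem apply_empty_of_dirac (hX : IsMultiresolution B (dirac p) X) (hp : IsRanking B p) :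
    X ∅ [] = 1 := by
  rw [hX.empty_eq_marg, marg_dirac hp (empty_subset B)]
  simp [dirac, restrictWord]

end IsMultiresolution

end Multiresolution

/-- **Recursive formula for the wavelet coefficients of Dirac functions.**
Let `α B π π'` be the `H_B`-component, evaluated at `π`, of the (unique) MRA decomposition of
`δ_{π'}` in `L(Γ(B))`. Then `α` satisfies the stated recursion over contiguous subwords. -/
theorem alpha_recursion {n : ℕ} (hn : 2 ≤ n)
    (α : Finset (Fin n) → Word n → Word n → ℝ)
    (hα : ∀ B : Finset (Fin n), 2 ≤ B.card → ∀ π' : Word n, IsRanking B π' →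
      ∃ X : Finset (Fin n) → Word n → ℝ,
        (∀ B' ∈ Pbar B, MemH B' (X B')) ∧
        dirac π' = ∑ B' ∈ Pbar B, synth B (X B') ∧
        (∀ π : Word n, α B π π' = X B π))
    (B : Finset (Fin n)) (hB : 2 ≤ B.card)
    (π π' : Word n) (hπ : IsRanking B π) (hπ' : IsRanking B π') :
    α B π π' =
      (if π = π' then (1:ℝ) else 0) - 1 / (Nat.factorial B.card : ℝ) -
        ∑ i ∈ Finset.range π.length, ∑ j ∈ Finset.range π.length,
          (if i < j ∧ j - i < π.length - 1 then
            α ((π.drop i).take (j - i + 1)).toFinset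
                ((π.drop i).take (j - i + 1))
                (restrictWord π' ((π.drop i).take (j - i + 1)).toFinset) /
              (Nat.factorial (π.length - j + i) : ℝ)
          else 0) := by
  obtain ⟨X, hXH, hXsum, hαX⟩ := hα B hB π' hπ'
  have hX : IsMultiresolution B (dirac π') X := ⟨hXH, hXsum⟩
  have hcoeff : ∀ i j, i < j → j < π.length →
      α (subword π i j).toFinset (subword π i j)
        (restrictWord π' (subword π i j).toFinset) =
      X (subword π i j).toFinset (subword π i j) := by
    intro i j hij hj
    have hC := toFinset_subword_mem_Pbar hπ hij hj
    obtain ⟨Y, hYH, hYsum, hαY⟩ := hα _ (two_le_card_toFinset_subword hπ.1 hij hj) _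
      (hπ'.restrictWord_of_subset (mem_Pbar.1 hC).1)
    rw [hαY, hX.eq_of_dirac hπ' hC ⟨hYH, hYsum⟩]
  have heval := hX.apply_eq_add_sum_subword hB hπ
  rw [hX.apply_empty_of_dirac hπ', ← hαX, dirac] at heval
  rw [heval, add_sub_cancel_left, eq_comm, sub_eq_iff_eq_add]
  congr 1
  refine sum_congr rfl fun i _ => sum_congr rfl fun j hj => ?_
  refine if_ctx_congr Iff.rfl (fun hij => ?_) fun _ => rfl
  rw [← hcoeff i j hij.1 (mem_range.1 hj)]
  rfl
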